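/- arXiv:1208.0411 — 3 statements merged into one kernel-verified Lean document; each statement's English description precedes it below -/
import Mathlib

section
/- Let I ≥ 1 and let F : [0,∞) × ℝ^I → ℝ^I be continuous and satisfy the Lipschitz condition ‖F(t,P) − F(t,M)‖ ≤ L‖P − M‖ for all P, M ∈ ℝ^I and all t ≥ 0, where ‖N‖ = Σ_{i=1}^I |N_i|. Assume F is quasi-positive: for every M ∈ ℝ^I with M_i ≥ 0 for all i, and every index i with M_i = 0, one has F_i(t,M) ≥ 0 for all t ≥ 0. Then every differentiable solution y : [0,∞) → ℝ^I of y'(t) = F(t, y(t)) with componentwise nonnegative initial value y(0) ≥ 0 satisfies y(t) ≥ 0 componentwise for all t ≥ 0. -/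
open Set

/-!
Measure the distance of the solution from the positive cone by `S = ‖y⁻‖`, in the discrete norm.
Each `(y i)⁻` has a right derivative, which vanishes where `y i > 0` and is at most `(y' i)⁻`
elsewhere. Where `y i ≤ 0`, the truncation `y⁺` has `i`-th component zero, so `F (y⁺) i ≥ 0` by
quasi-positivity and `(F y i)⁻ ≤ |F y i - F (y⁺) i|`. Summing over `i`, the Lipschitz condition
bounds the right derivative of `S` by `L * ‖y - y⁺‖ = L * S`, and Grönwall's inequality propagates
`S = 0` from the initial time.
-/

theorem abs_sub_posPart {α : Type*} [AddCommGroup α] [LinearOrder α] [IsOrderedAddMonoid α]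
    (a : α) : |a - a⁺| = a⁻ := by
  rw [abs_sub_comm, sub_eq_of_eq_add' (sub_eq_iff_eq_add.1 (posPart_sub_negPart a)),
    abs_of_nonneg (negPart_nonneg a)]

theorem negPart_mul_of_nonneg {R : Type*} [Ring R] [LinearOrder R] [IsOrderedRing R] {c : R}
    (hc : 0 ≤ c) (a : R) : (c * a)⁻ = c * a⁻ := by
  rw [negPart_def, negPart_def, mul_max_of_nonneg _ _ hc, mul_neg, mul_zero]

section RightDerivative

open scoped Topology

variable {f : ℝ → ℝ} {f' x : ℝ} {s : Set ℝ}

theorem hasDerivWithinAt_negPart_of_pos (hf : ContinuousWithinAt f s x) (hx : 0 < f x) :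
    HasDerivWithinAt (fun z ↦ (f z)⁻) 0 s x := by
  have hpos : ∀ᶠ z in 𝓝[s] x, 0 < f z := hf.eventually_const_lt hx
  refine (hasDerivWithinAt_const x s 0).congr_of_eventuallyEq ?_ (negPart_of_nonneg hx.le)
  filter_upwards [hpos] with z hz using negPart_of_nonneg hz.le

theorem hasDerivWithinAt_negPart_of_neg (hf : HasDerivWithinAt f f' s x) (hx : f x < 0) :
    HasDerivWithinAt (fun z ↦ (f z)⁻) (-f') s x := by
  have hneg : ∀ᶠ z in 𝓝[s] x, f z < 0 := hf.continuousWithinAt.eventually_lt_const hx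
  refine hf.fun_neg.congr_of_eventuallyEq ?_ (negPart_of_nonpos hx.le)
  filter_upwards [hneg] with z hz using negPart_of_nonpos hz.le

theorem hasDerivWithinAt_negPart_Ici_of_eq_zero (hf : HasDerivWithinAt f f' (Ici x) x)
    (hx : f x = 0) : HasDerivWithinAt (fun z ↦ (f z)⁻) f'⁻ (Ici x) x := by
  rw [← hasDerivWithinAt_Ioi_iff_Ici, hasDerivWithinAt_iff_tendsto_slope' self_notMem_Ioi]
    at hf ⊢
  refine ((continuous_negPart.tendsto f').comp hf).congr' ?_
  filter_upwards [self_mem_nhdsWithin] with z hz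
  have hzx : 0 ≤ (z - x)⁻¹ := inv_nonneg.2 (sub_nonneg.2 (le_of_lt hz))
  simp only [Function.comp_apply, slope_def_module, hx, negPart_zero, sub_zero, smul_eq_mul,
    negPart_mul_of_nonneg hzx]

theorem exists_hasDerivWithinAt_negPart_Ici (hf : HasDerivWithinAt f f' (Ici x) x) :
    ∃ d ≤ if f x ≤ 0 then f'⁻ else 0, HasDerivWithinAt (fun z ↦ (f z)⁻) d (Ici x) x := by
  rcases lt_trichotomy (f x) 0 with hx | hx | hx
  · exact ⟨-f', by simpa only [hx.le, if_true] using neg_le_negPart f',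
      hasDerivWithinAt_negPart_of_neg hf hx⟩
  · exact ⟨f'⁻, by simp only [hx, le_refl, if_true],
      hasDerivWithinAt_negPart_Ici_of_eq_zero hf hx⟩
  · exact ⟨0, by simp only [hx.not_ge, if_false, le_refl],
      hasDerivWithinAt_negPart_of_pos hf.continuousWithinAt hx⟩

end RightDerivative

section QuasiPositivity

variable {ι : Type*}

/-- A vector field `f` on `ℝ^ι` is quasi-positive if on each face `M i = 0` of the positive cone it
does not point out of the cone. A time-dependent field `F` is treated through its slices `F t`. -/
def QuasiPositive (f : (ι → ℝ) → ι → ℝ) : Prop :=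
  ∀ M, 0 ≤ M → ∀ i, M i = 0 → 0 ≤ f M i

namespace QuasiPositive

variable {f : (ι → ℝ) → ι → ℝ} {M : ι → ℝ}

theorem negPart_apply_le_abs_sub (hf : QuasiPositive f) {i : ι} (hi : M i ≤ 0) :
    (f M i)⁻ ≤ |f M i - f M⁺ i| := by
  have hface : 0 ≤ f M⁺ i := hf M⁺ (posPart_nonneg M) i (posPart_of_nonpos hi)
  refine sup_le ?_ (abs_nonneg _)
  linarith [neg_abs_le (f M i - f M⁺ i)]

theorem sum_negPart_apply_le [Fintype ι] {L : ℝ} (hf : QuasiPositive f)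
    (hLip : ∑ i, |f M i - f M⁺ i| ≤ L * ∑ i, |M i - M⁺ i|) :
    ∑ i with M i ≤ 0, (f M i)⁻ ≤ L * ∑ i, (M i)⁻ :=
  calc ∑ i with M i ≤ 0, (f M i)⁻
    _ ≤ ∑ i with M i ≤ 0, |f M i - f M⁺ i| :=
      Finset.sum_le_sum fun _ hi ↦ hf.negPart_apply_le_abs_sub (Finset.mem_filter.1 hi).2
    _ ≤ ∑ i, |f M i - f M⁺ i| :=
      Finset.sum_le_univ_sum_of_nonneg fun _ ↦ abs_nonneg _
    _ ≤ L * ∑ i, |M i - M⁺ i| := hLip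
    _ = L * ∑ i, (M i)⁻ := by simp only [Pi.posPart_apply, abs_sub_posPart]

end QuasiPositive

end QuasiPositivity

section Gronwall

variable {ι : Type*} [Fintype ι] {L a b : ℝ} {y : ℝ → ι → ℝ}

theorem exists_hasDerivWithinAt_sum_negPart_Ici {v : ι → ℝ} {t : ℝ}
    (hy : HasDerivWithinAt y v (Ici t) t) :
    ∃ d ≤ ∑ i with y t i ≤ 0, (v i)⁻,
      HasDerivWithinAt (fun s ↦ ∑ i, (y s i)⁻) d (Ici t) t := by
  choose d hd_le hd using fun i ↦
    exists_hasDerivWithinAt_negPart_Ici (hasDerivWithinAt_pi.1 hy i)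
  refine ⟨∑ i, d i, ?_, HasDerivWithinAt.fun_sum fun i _ ↦ hd i⟩
  rw [Finset.sum_filter]
  exact Finset.sum_le_sum fun i _ ↦ hd_le i

theorem sum_negPart_le_mul_exp {y' : ℝ → ι → ℝ} (hcont : ContinuousOn y (Icc a b))
    (hy : ∀ t ∈ Ico a b, HasDerivWithinAt y (y' t) (Ici t) t)
    (hbound : ∀ t ∈ Ico a b, ∑ i with y t i ≤ 0, (y' t i)⁻ ≤ L * ∑ i, (y t i)⁻) :
    ∀ t ∈ Icc a b, ∑ i, (y t i)⁻ ≤ (∑ i, (y a i)⁻) * Real.exp (L * (t - a)) := by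
  have hS : ContinuousOn (fun t ↦ ∑ i, (y t i)⁻) (Icc a b) :=
    continuousOn_finsetSum _ fun i _ ↦
      continuous_negPart.comp_continuousOn (continuousOn_pi.1 hcont i)
  intro t ht
  rw [← gronwallBound_ε0]
  refine le_gronwallBound_of_liminf_deriv_right_le hS (fun s hs r hr ↦ ?_) le_rfl
    (fun s hs ↦ (hbound s hs).trans_eq (add_zero _).symm) t ht
  obtain ⟨d, hd_le, hd⟩ := exists_hasDerivWithinAt_sum_negPart_Ici (hy s hs)
  exact hd.liminf_right_slope_le (hd_le.trans_lt hr)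

theorem stmt1_general {F : ℝ → (ι → ℝ) → ι → ℝ}
    (hLip : ∀ t ∈ Ico a b, ∀ M : ι → ℝ, ∑ i, |F t M i - F t M⁺ i| ≤ L * ∑ i, |M i - M⁺ i|)
    (hqp : ∀ t ∈ Ico a b, QuasiPositive (F t)) (hcont : ContinuousOn y (Icc a b))
    (hy : ∀ t ∈ Ico a b, HasDerivWithinAt y (F t (y t)) (Ici t) t) (ha : 0 ≤ y a) :
    ∀ t ∈ Icc a b, 0 ≤ y t := by
  intro t ht i
  have hS : ∑ i, (y t i)⁻ ≤ (∑ i, (y a i)⁻) * Real.exp (L * (t - a)) :=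
    sum_negPart_le_mul_exp hcont hy
      (fun s hs ↦ (hqp s hs).sum_negPart_apply_le (hLip s hs (y s))) t ht
  have hSa : ∑ i, (y a i)⁻ = 0 := Finset.sum_eq_zero fun i _ ↦ negPart_of_nonneg (ha i)
  rw [hSa, zero_mul] at hS
  have hi : (y t i)⁻ ≤ ∑ j, (y t j)⁻ :=
    Finset.single_le_sum (fun j _ ↦ negPart_nonneg (y t j)) (Finset.mem_univ i)
  exact negPart_nonpos.1 (hi.trans hS)

end Gronwall

/-- Quasi-positivity with a Lipschitz right-hand side implies that solutions of the
semi-discrete system starting from componentwise nonnegative data stay componentwise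
nonnegative for all times. -/
theorem stmt1 (I : ℕ) (hI : 1 ≤ I) (L : ℝ)
    (F : ℝ → (Fin I → ℝ) → (Fin I → ℝ))
    (hFcont : ContinuousOn (fun p : ℝ × (Fin I → ℝ) => F p.1 p.2) (Ici (0:ℝ) ×ˢ univ))
    (hLip : ∀ t ≥ (0:ℝ), ∀ P M : Fin I → ℝ,
      ∑ i, |F t P i - F t M i| ≤ L * ∑ i, |P i - M i|)
    (hqp : ∀ t ≥ (0:ℝ), ∀ M : Fin I → ℝ, (∀ i, 0 ≤ M i) → ∀ i, M i = 0 → 0 ≤ F t M i)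
    (y y' : ℝ → Fin I → ℝ)
    (hy : ∀ t ≥ (0:ℝ), ∀ i, HasDerivAt (fun s => y s i) (y' t i) t)
    (hode : ∀ t ≥ (0:ℝ), y' t = F t (y t))
    (h0 : ∀ i, 0 ≤ y 0 i) :
    ∀ t ≥ (0:ℝ), ∀ i, 0 ≤ y t i := by
  intro t ht
  have hvec : ∀ s ≥ (0:ℝ), HasDerivAt y (F s (y s)) s := fun s hs ↦
    hode s hs ▸ hasDerivAt_pi.2 (hy s hs)
  exact stmt1_general (fun s hs M ↦ hLip s hs.1 M M⁺) (fun s hs ↦ hqp s hs.1)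
    (fun s hs ↦ (hvec s hs.1).continuousAt.continuousWithinAt)
    (fun s hs ↦ (hvec s hs.1).hasDerivWithinAt) h0 t (right_mem_Icc.2 ht)
end

section
/- Let a grid of ]0,R] with I cells be given, and let β be symmetric with 0 ≤ β(x_j, x_k) ≤ C for all pivots x_j, x_k. Let N, M ∈ ℝ^I be componentwise nonnegative with Σ_{j=1}^I N_j ≤ N_T⁰ and Σ_{j=1}^I M_j ≤ N_T⁰. Then the discrete birth rates satisfy Σ_{i=1}^I |B̂_i(N) − B̂_i(M)| ≤ 3 N_T⁰ C · Σ_{k=1}^I |N_k − M_k|, i.e. the discrete birth term is Lipschitz with constant 3 N_T⁰ C on this set. -/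
/-- The pivot (grid point) of the `k`-th cell: the midpoint of `]xb (k-1), xb k]`.
Here `xb k` denotes the cell boundary `x_{k+1/2}`. -/
noncomputable def pivot (xb : ℕ → ℝ) (k : ℕ) : ℝ := (xb (k - 1) + xb k) / 2

/-- The pairs `(j,k)` with `1 ≤ k ≤ j ≤ I` such that `x_j + x_k` lies in the `i`-th cell
`[x_{i-1/2}, x_{i+1/2})`. -/
noncomputable def birthPairs (xb : ℕ → ℝ) (I i : ℕ) : Finset (ℕ × ℕ) :=
  (Finset.Icc 1 I ×ˢ Finset.Icc 1 I).filter
    (fun q => q.2 ≤ q.1 ∧ xb (i - 1) ≤ pivot xb q.1 + pivot xb q.2 ∧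
      pivot xb q.1 + pivot xb q.2 < xb i)

/-- The discrete birth rate
`B̂_i(N) = ∑_{x_{i-1/2} ≤ x_j + x_k < x_{i+1/2}, j ≥ k} (1 − δ_{jk}/2) β(x_k, x_j) N_j N_k`. -/
noncomputable def Bhat (xb : ℕ → ℝ) (β : ℝ → ℝ → ℝ) (I : ℕ) (N : ℕ → ℝ) (i : ℕ) : ℝ :=
  ∑ q ∈ birthPairs xb I i,
    (if q.1 = q.2 then (1 : ℝ)/2 else 1) * β (pivot xb q.2) (pivot xb q.1) * N q.1 * N q.2

/-- The discrete volume flux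
`V̂_i(N) = ∑_{x_{i-1/2} ≤ x_j + x_k < x_{i+1/2}, j ≥ k} (1 − δ_{jk}/2) β(x_k, x_j) N_j N_k (x_j + x_k)`. -/
noncomputable def Vhat (xb : ℕ → ℝ) (β : ℝ → ℝ → ℝ) (I : ℕ) (N : ℕ → ℝ) (i : ℕ) : ℝ :=
  ∑ q ∈ birthPairs xb I i,
    (if q.1 = q.2 then (1 : ℝ)/2 else 1) * β (pivot xb q.2) (pivot xb q.1) * N q.1 * N q.2 *
      (pivot xb q.1 + pivot xb q.2)

/-- The discrete death rate `D̂_i(N) = N_i ∑_{j=1}^I β(x_i, x_j) N_j`. -/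
noncomputable def Dhat (xb : ℕ → ℝ) (β : ℝ → ℝ → ℝ) (I : ℕ) (N : ℕ → ℝ) (i : ℕ) : ℝ :=
  N i * ∑ j ∈ Finset.Icc 1 I, β (pivot xb i) (pivot xb j) * N j

/-! The cells are disjoint, so each pair `k ≤ j` contributes to at most one birth rate, and
`∑_i |B̂_i(N) - B̂_i(M)|` is at most `C` times the sum of `(1 - δ_{jk}/2) |N_j N_k - M_j M_k|` over
`k ≤ j`. The weight `1 - δ_{jk}/2` makes this half the sum over all ordered pairs, and
`N_j N_k - M_j M_k = N_j (N_k - M_k) + (N_j - M_j) M_k` bounds the latter by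
`2 N_T⁰ ∑ |N_k - M_k|`. Hence already `N_T⁰ C` is a Lipschitz constant. -/

/-- The factor `1 - δ_{jk}/2` by which `Bhat` weights the unordered pair of cells `{j, k}`. -/
noncomputable def pairWeight {ι : Type*} [DecidableEq ι] (j k : ι) : ℝ :=
  if j = k then 1 / 2 else 1

theorem pairWeight_nonneg {ι : Type*} [DecidableEq ι] (j k : ι) : 0 ≤ pairWeight j k := by
  unfold pairWeight
  split_ifs <;> norm_num

theorem sum_pairWeight_mul_eq_half_sum {ι : Type*} [LinearOrder ι] (s : Finset ι)
    {f : ι → ι → ℝ} (hf : ∀ j k, f j k = f k j) :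
    ∑ q ∈ s ×ˢ s with q.2 ≤ q.1, pairWeight q.1 q.2 * f q.1 q.2 =
      (∑ j ∈ s, ∑ k ∈ s, f j k) / 2 := by
  let g : ι → ι → ℝ := fun j k => if k ≤ j then pairWeight j k * f j k else 0
  have add_swap (j k : ι) : g j k + g k j = f j k := by
    rcases lt_trichotomy j k with h | rfl | h
    · simp [g, pairWeight, h.le, h.not_ge, h.ne', hf k j]
    · simp only [g, pairWeight, le_refl, if_true]
      ring
    · simp [g, pairWeight, h.le, h.not_ge, h.ne']
  have sum_swap : ∑ j ∈ s, ∑ k ∈ s, g j k = ∑ j ∈ s, ∑ k ∈ s, g k j := Finset.sum_comm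
  rw [Finset.sum_filter, Finset.sum_product, eq_div_iff two_ne_zero, mul_two]
  calc ∑ j ∈ s, ∑ k ∈ s, g j k + ∑ j ∈ s, ∑ k ∈ s, g j k
      = ∑ j ∈ s, ∑ k ∈ s, (g j k + g k j) := by
        simp only [Finset.sum_add_distrib, ← sum_swap]
    _ = ∑ j ∈ s, ∑ k ∈ s, f j k := by simp only [add_swap]

theorem sum_sum_abs_mul_sub_mul_le {R ι κ : Type*} [Ring R] [LinearOrder R]
    [IsStrictOrderedRing R] (s : Finset ι) (t : Finset κ) (a b : ι → R) (c d : κ → R) :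
    ∑ i ∈ s, ∑ j ∈ t, |a i * c j - b i * d j| ≤
      (∑ i ∈ s, |a i|) * ∑ j ∈ t, |c j - d j| + (∑ i ∈ s, |a i - b i|) * ∑ j ∈ t, |d j| := by
  simp only [Finset.sum_mul_sum, ← Finset.sum_add_distrib, ← abs_mul]
  gcongr with i _ j _
  calc |a i * c j - b i * d j| = |a i * (c j - d j) + (a i - b i) * d j| := by
        rw [mul_sub, sub_mul, sub_add_sub_cancel]
    _ ≤ |a i * (c j - d j)| + |(a i - b i) * d j| := abs_add_le _ _

section BirthRate

variable {xb : ℕ → ℝ} {I : ℕ}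

theorem pairwiseDisjoint_birthPairs (hxb : MonotoneOn xb (Set.Iic I)) :
    (Finset.Icc 1 I : Set ℕ).PairwiseDisjoint (birthPairs xb I) := by
  intro i hi j hj hij
  wlog hlt : i < j generalizing i j
  · exact (this hj hi hij.symm (hij.lt_or_gt.resolve_left hlt)).symm
  have hjI : j ≤ I := (Finset.mem_Icc.1 hj).2
  have boundary_le : xb i ≤ xb (j - 1) :=
    hxb (Set.mem_Iic.2 (by lia)) (Set.mem_Iic.2 (by lia)) (by lia)
  refine Finset.disjoint_left.2 fun q hqi hqj => ?_
  obtain ⟨-, -, -, hlt_i⟩ := Finset.mem_filter.1 hqi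
  obtain ⟨-, -, hge_j, -⟩ := Finset.mem_filter.1 hqj
  exact (hlt_i.trans_le (boundary_le.trans hge_j)).false

theorem birthPairs_subset_filter_le (xb : ℕ → ℝ) (I i : ℕ) :
    birthPairs xb I i ⊆ {q ∈ Finset.Icc 1 I ×ˢ Finset.Icc 1 I | q.2 ≤ q.1} :=
  Finset.monotone_filter_right _ fun _ _ hq => hq.1

theorem sum_birthPairs_le_sum_filter_le (hxb : MonotoneOn xb (Set.Iic I))
    {f : ℕ × ℕ → ℝ} (hf : ∀ q, 0 ≤ f q) :
    ∑ i ∈ Finset.Icc 1 I, ∑ q ∈ birthPairs xb I i, f q ≤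
      ∑ q ∈ Finset.Icc 1 I ×ˢ Finset.Icc 1 I with q.2 ≤ q.1, f q := by
  rw [← Finset.sum_biUnion (pairwiseDisjoint_birthPairs hxb)]
  exact Finset.sum_le_sum_of_subset_of_nonneg
    (Finset.biUnion_subset.2 fun i _ => birthPairs_subset_filter_le xb I i) fun q _ _ => hf q

theorem abs_Bhat_sub_Bhat_le {β : ℝ → ℝ → ℝ} {C : ℝ}
    (hβ : ∀ j ∈ Finset.Icc 1 I, ∀ k ∈ Finset.Icc 1 I, |β (pivot xb j) (pivot xb k)| ≤ C)
    (N M : ℕ → ℝ) (i : ℕ) :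
    |Bhat xb β I N i - Bhat xb β I M i| ≤
      C * ∑ q ∈ birthPairs xb I i,
        pairWeight q.1 q.2 * |N q.1 * N q.2 - M q.1 * M q.2| := by
  rw [Bhat, Bhat, ← Finset.sum_sub_distrib, Finset.mul_sum]
  refine (Finset.abs_sum_le_sum_abs _ _).trans (Finset.sum_le_sum fun q hq => ?_)
  obtain ⟨hj, hk⟩ := Finset.mem_product.1 (Finset.filter_subset _ _ hq)
  set b := β (pivot xb q.2) (pivot xb q.1)
  have hb : |b| ≤ C := hβ q.2 hk q.1 hj
  have hw : 0 ≤ pairWeight q.1 q.2 := pairWeight_nonneg q.1 q.2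
  change |pairWeight q.1 q.2 * b * N q.1 * N q.2 - pairWeight q.1 q.2 * b * M q.1 * M q.2| ≤ _
  calc _ = |b * (pairWeight q.1 q.2 * (N q.1 * N q.2 - M q.1 * M q.2))| := by ring_nf
    _ = |b| * (pairWeight q.1 q.2 * |N q.1 * N q.2 - M q.1 * M q.2|) := by
        rw [abs_mul, abs_mul, abs_of_nonneg hw]
    _ ≤ C * (pairWeight q.1 q.2 * |N q.1 * N q.2 - M q.1 * M q.2|) := by gcongr

theorem stmt3_general (hxb : MonotoneOn xb (Set.Iic I)) {β : ℝ → ℝ → ℝ} {C NT0 : ℝ}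
    (hβ : ∀ j ∈ Finset.Icc 1 I, ∀ k ∈ Finset.Icc 1 I, |β (pivot xb j) (pivot xb k)| ≤ C)
    {N M : ℕ → ℝ}
    (hN : ∑ j ∈ Finset.Icc 1 I, |N j| ≤ NT0) (hM : ∑ j ∈ Finset.Icc 1 I, |M j| ≤ NT0) :
    ∑ i ∈ Finset.Icc 1 I, |Bhat xb β I N i - Bhat xb β I M i| ≤
      NT0 * C * ∑ k ∈ Finset.Icc 1 I, |N k - M k| := by
  obtain rfl | hI := I.eq_zero_or_pos
  · simp
  have h1 : 1 ∈ Finset.Icc 1 I := Finset.mem_Icc.2 ⟨le_rfl, hI⟩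
  have hC : 0 ≤ C := (abs_nonneg _).trans (hβ 1 h1 1 h1)
  set s := Finset.Icc 1 I
  let prodDiff : ℕ → ℕ → ℝ := fun j k => |N j * N k - M j * M k|
  have prodDiff_symm (j k : ℕ) : prodDiff j k = prodDiff k j := by simp only [prodDiff, mul_comm]
  calc ∑ i ∈ s, |Bhat xb β I N i - Bhat xb β I M i|
      ≤ C * ∑ i ∈ s, ∑ q ∈ birthPairs xb I i, pairWeight q.1 q.2 * prodDiff q.1 q.2 := by
        rw [Finset.mul_sum]
        exact Finset.sum_le_sum fun i _ => abs_Bhat_sub_Bhat_le hβ N M i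
    _ ≤ C * ∑ q ∈ s ×ˢ s with q.2 ≤ q.1, pairWeight q.1 q.2 * prodDiff q.1 q.2 := by
        gcongr
        exact sum_birthPairs_le_sum_filter_le hxb fun q =>
          mul_nonneg (pairWeight_nonneg _ _) (abs_nonneg _)
    _ = C * ((∑ j ∈ s, ∑ k ∈ s, prodDiff j k) / 2) := by
        rw [sum_pairWeight_mul_eq_half_sum s prodDiff_symm]
    _ ≤ C * (((∑ j ∈ s, |N j|) * ∑ k ∈ s, |N k - M k| +
          (∑ k ∈ s, |N k - M k|) * ∑ j ∈ s, |M j|) / 2) := by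
        gcongr
        exact sum_sum_abs_mul_sub_mul_le s s N M N M
    _ ≤ C * ((NT0 * ∑ k ∈ s, |N k - M k| + (∑ k ∈ s, |N k - M k|) * NT0) / 2) := by gcongr
    _ = NT0 * C * ∑ k ∈ s, |N k - M k| := by ring

end BirthRate

/-- Lipschitz estimate for the discrete birth term: on the set of componentwise nonnegative
vectors with total number of particles at most `N_T⁰`, the discrete birth rates satisfy
`∑_i |B̂_i(N) − B̂_i(M)| ≤ 3 N_T⁰ C ∑_k |N_k − M_k|`. -/
theorem stmt3 (I : ℕ) (hI : 1 ≤ I) (R : ℝ) (hR : 0 < R)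
    (xb : ℕ → ℝ) (hxb0 : xb 0 = 0) (hxbI : xb I = R)
    (hmono : ∀ k < I, xb k < xb (k + 1))
    (β : ℝ → ℝ → ℝ) (C NT0 : ℝ)
    (hβsym : ∀ x y, β x y = β y x)
    (hβ : ∀ j ∈ Finset.Icc 1 I, ∀ k ∈ Finset.Icc 1 I,
      0 ≤ β (pivot xb j) (pivot xb k) ∧ β (pivot xb j) (pivot xb k) ≤ C)
    (N M : ℕ → ℝ)
    (hN : ∀ j ∈ Finset.Icc 1 I, 0 ≤ N j) (hM : ∀ j ∈ Finset.Icc 1 I, 0 ≤ M j)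
    (hNs : ∑ j ∈ Finset.Icc 1 I, N j ≤ NT0) (hMs : ∑ j ∈ Finset.Icc 1 I, M j ≤ NT0) :
    ∑ i ∈ Finset.Icc 1 I, |Bhat xb β I N i - Bhat xb β I M i| ≤
      3 * NT0 * C * ∑ k ∈ Finset.Icc 1 I, |N k - M k| := by
  have lipschitz := stmt3_general
    (monotoneOn_of_le_add_one Set.ordConnected_Iic fun k _ _ hk => (hmono k hk).le)
    (fun j hj k hk => (abs_of_nonneg (hβ j hj k hk).1).trans_le (hβ j hj k hk).2)
    ((Finset.sum_congr rfl fun j hj => abs_of_nonneg (hN j hj)).trans_le hNs)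
    ((Finset.sum_congr rfl fun j hj => abs_of_nonneg (hM j hj)).trans_le hMs)
  linarith [(Finset.sum_nonneg fun _ _ => abs_nonneg _).trans lipschitz]
end

section
/- Let a < b be real numbers, m = (a+b)/2, and let f : [a,b] → ℝ be twice continuously differentiable. Then | ∫_a^b (x − m) f(x) dx − f'(m) (b − a)³ / 12 | ≤ (sup_{x∈[a,b]} |f''(x)|) (b − a)⁴ / 64. -/
open Set intervalIntegral

/-!
Let `m` be the midpoint of `[a, b]`. Since `∫ (x - m) = 0` and `∫ (x - m)² = (b - a)³ / 12`, the
first moment about `m` of the affine function `c + (x - m) v` is exactly `(b - a)³ / 12 * v`, so the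
quadrature error of `f` is the first moment of its Taylor remainder at `m`. That remainder is at
most `M / 2 * (x - m)²`, and `∫ |x - m|³ = (b - a)⁴ / 32`.
-/

theorem add_div_two_mem_Icc {𝕜 : Type*} [Field 𝕜] [LinearOrder 𝕜] [IsStrictOrderedRing 𝕜]
    {a b : 𝕜} (hab : a ≤ b) : (a + b) / 2 ∈ Icc a b :=
  ⟨by linarith, by linarith⟩

section TaylorRemainder

variable {E F : Type*} [NormedAddCommGroup E] [NormedSpace ℝ E]
  [NormedAddCommGroup F] [NormedSpace ℝ F]

theorem norm_image_sub_sub_le_of_norm_hasFDerivWithin_sub_le {s : Set E} {x y : E} {f : E → F}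
    {f' : E → E →L[ℝ] F} {M : ℝ} (hs : StarConvex ℝ x s)
    (hf : ∀ z ∈ s, HasFDerivWithinAt f (f' z) s z)
    (hM : ∀ z ∈ s, ‖f' z - f' x‖ ≤ M * ‖z - x‖) (hy : y ∈ s) :
    ‖f y - f x - f' x (y - x)‖ ≤ M / 2 * ‖y - x‖ ^ 2 := by
  let γ : ℝ → E := fun t => x + t • (y - x)
  let φ : ℝ → F := fun t => f (γ t) - f x - t • f' x (y - x)
  have hγ_mem : MapsTo γ (Icc 0 1) s := fun t ht => hs.add_smul_sub_mem hy ht.1 ht.2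
  have hγ (t : ℝ) : HasDerivAt γ (y - x) t := by
    simpa only [one_smul] using ((hasDerivAt_id' t).smul_const (y - x)).const_add x
  have hφ : ∀ t ∈ Icc (0 : ℝ) 1,
      HasDerivWithinAt φ ((f' (γ t) - f' x) (y - x)) (Icc 0 1) t := fun t ht => by
    have hfγ := (hf (γ t) (hγ_mem ht)).comp_hasDerivWithinAt t (hγ t).hasDerivWithinAt hγ_mem
    have hlin := (hasDerivAt_id' t).smul_const (f' x (y - x))
    exact ((hfγ.sub_const (f x)).fun_sub hlin.hasDerivWithinAt).congr_deriv (by simp)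
  have hφ_bound : ∀ t ∈ Ico (0 : ℝ) 1,
      ‖(f' (γ t) - f' x) (y - x)‖ ≤ M / 2 * ‖y - x‖ ^ 2 * (2 * t) := fun t ht => by
    calc ‖(f' (γ t) - f' x) (y - x)‖ ≤ M * ‖γ t - x‖ * ‖y - x‖ :=
          (f' (γ t) - f' x).le_of_opNorm_le (hM _ (hγ_mem (Ico_subset_Icc_self ht))) _
      _ = M / 2 * ‖y - x‖ ^ 2 * (2 * t) := by
          simp only [γ, add_sub_cancel_left, norm_smul, Real.norm_of_nonneg ht.1]
          ring
  have hB (t : ℝ) : HasDerivAt (fun t => M / 2 * ‖y - x‖ ^ 2 * t ^ 2)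
      (M / 2 * ‖y - x‖ ^ 2 * (2 * t)) t := by
    simpa using (hasDerivAt_pow 2 t).const_mul (M / 2 * ‖y - x‖ ^ 2)
  have hφ_one := image_norm_le_of_norm_deriv_right_le_deriv_boundary
    (fun t ht => (hφ t ht).continuousWithinAt)
    (fun t ht => (hφ t (Ico_subset_Icc_self ht)).mono_of_mem_nhdsWithin
      (Icc_mem_nhdsGE_of_mem ht))
    (by simp [φ, γ]) hB hφ_bound (right_mem_Icc.2 zero_le_one)
  simpa [φ, γ] using hφ_one

theorem norm_image_sub_sub_le_of_norm_hasDerivWithin_sub_le {s : Set ℝ} {x y : ℝ} {f f' : ℝ → F}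
    {M : ℝ} (hs : StarConvex ℝ x s) (hf : ∀ z ∈ s, HasDerivWithinAt f (f' z) s z)
    (hM : ∀ z ∈ s, ‖f' z - f' x‖ ≤ M * |z - x|) (hy : y ∈ s) :
    ‖f y - f x - (y - x) • f' x‖ ≤ M / 2 * (y - x) ^ 2 := by
  have hM' : ∀ z ∈ s, ‖ContinuousLinearMap.toSpanSingleton ℝ (f' z) -
      ContinuousLinearMap.toSpanSingleton ℝ (f' x)‖ ≤ M * ‖z - x‖ := fun z hz => by
    simpa only [← ContinuousLinearMap.toSpanSingletonLIE_apply, ← map_sub,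
      LinearIsometryEquiv.norm_map, Real.norm_eq_abs] using hM z hz
  simpa using norm_image_sub_sub_le_of_norm_hasFDerivWithin_sub_le hs
    (fun z hz => (hf z hz).hasFDerivWithinAt) hM' hy

end TaylorRemainder

section Moments

theorem integral_abs_sub_pow {a b c : ℝ} (hac : a ≤ c) (hcb : c ≤ b) (n : ℕ) :
    ∫ x in a..b, |x - c| ^ n = ((c - a) ^ (n + 1) + (b - c) ^ (n + 1)) / (n + 1) := by
  have hint (u v : ℝ) : IntervalIntegrable (fun x => |x - c| ^ n) MeasureTheory.volume u v :=
    Continuous.intervalIntegrable (by fun_prop) u v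
  rw [← integral_add_adjacent_intervals (hint a c) (hint c b), integral_of_le hac,
    integral_of_le hcb, ← uIoc_of_ge hac, ← uIoc_of_le hcb, integral_pow_abs_sub_uIoc,
    integral_pow_abs_sub_uIoc, abs_sub_comm, abs_of_nonneg (sub_nonneg.2 hac),
    abs_of_nonneg (sub_nonneg.2 hcb), add_div]

theorem integral_sub_midpoint (a b : ℝ) : ∫ x in a..b, (x - (a + b) / 2) = 0 := by
  rw [integral_comp_sub_right (fun x => x), integral_id]
  ring

theorem integral_sub_midpoint_sq (a b : ℝ) :
    ∫ x in a..b, (x - (a + b) / 2) ^ 2 = (b - a) ^ 3 / 12 := by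
  rw [integral_comp_sub_right (· ^ 2), integral_pow]
  ring

variable {E : Type*} [NormedAddCommGroup E] [NormedSpace ℝ E] [CompleteSpace E]

theorem integral_sub_midpoint_smul_affine (a b : ℝ) (c v : E) :
    ∫ x in a..b, (x - (a + b) / 2) • (c + (x - (a + b) / 2) • v) = ((b - a) ^ 3 / 12) • v := by
  simp_rw [smul_add, smul_smul, ← sq]
  rw [integral_add (Continuous.intervalIntegrable (by fun_prop) _ _)
    (Continuous.intervalIntegrable (by fun_prop) _ _), intervalIntegral.integral_smul_const,
    intervalIntegral.integral_smul_const, integral_sub_midpoint, integral_sub_midpoint_sq,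
    zero_smul, zero_add]

theorem integral_sub_midpoint_smul_sub_affine {a b : ℝ} {f : ℝ → E}
    (hf : IntervalIntegrable f MeasureTheory.volume a b) (c v : E) :
    ∫ x in a..b, (x - (a + b) / 2) • (f x - c - (x - (a + b) / 2) • v) =
      (∫ x in a..b, (x - (a + b) / 2) • f x) - ((b - a) ^ 3 / 12) • v := by
  simp_rw [sub_sub, smul_sub]
  rw [integral_sub (hf.continuousOn_smul (by fun_prop))
    (Continuous.intervalIntegrable (by fun_prop) _ _), integral_sub_midpoint_smul_affine]

theorem norm_integral_sub_midpoint_smul_sub_le {a b K : ℝ} (hab : a ≤ b) {f : ℝ → E}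
    (hf : IntervalIntegrable f MeasureTheory.volume a b) {c v : E}
    (hK : ∀ x ∈ Icc a b,
      ‖f x - c - (x - (a + b) / 2) • v‖ ≤ K * (x - (a + b) / 2) ^ 2) :
    ‖(∫ x in a..b, (x - (a + b) / 2) • f x) - ((b - a) ^ 3 / 12) • v‖ ≤
      K * (b - a) ^ 4 / 32 := by
  have hmid := add_div_two_mem_Icc hab
  have hbound : ∀ x ∈ Ioc a b,
      ‖(x - (a + b) / 2) • (f x - c - (x - (a + b) / 2) • v)‖ ≤
        K * |x - (a + b) / 2| ^ 3 := fun x hx => by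
    calc ‖(x - (a + b) / 2) • (f x - c - (x - (a + b) / 2) • v)‖
        ≤ |x - (a + b) / 2| * (K * (x - (a + b) / 2) ^ 2) := by
          rw [norm_smul, Real.norm_eq_abs]
          gcongr
          exact hK x (Ioc_subset_Icc_self hx)
      _ = K * |x - (a + b) / 2| ^ 3 := by
          rw [← sq_abs (x - (a + b) / 2)]
          ring
  rw [← integral_sub_midpoint_smul_sub_affine hf c v]
  calc ‖∫ x in a..b, (x - (a + b) / 2) • (f x - c - (x - (a + b) / 2) • v)‖
      ≤ ∫ x in a..b, K * |x - (a + b) / 2| ^ 3 :=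
        norm_integral_le_of_norm_le hab (.of_forall hbound)
          (Continuous.intervalIntegrable (by fun_prop) _ _)
    _ = K * (b - a) ^ 4 / 32 := by
        rw [integral_const_mul, integral_abs_sub_pow hmid.1 hmid.2]
        ring

theorem stmt10_general {a b : ℝ} (hab : a ≤ b) {f f' : ℝ → E} {M : ℝ}
    (hf : ∀ x ∈ Icc a b, HasDerivWithinAt f (f' x) (Icc a b) x)
    (hM : ∀ x ∈ Icc a b, ‖f' x - f' ((a + b) / 2)‖ ≤ M * |x - (a + b) / 2|) :
    ‖(∫ x in a..b, (x - (a + b) / 2) • f x) - ((b - a) ^ 3 / 12) • f' ((a + b) / 2)‖ ≤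
      M * (b - a) ^ 4 / 64 := by
  have hf_cont : ContinuousOn f (Icc a b) := fun x hx => (hf x hx).continuousWithinAt
  have htaylor : ∀ x ∈ Icc a b, ‖f x - f ((a + b) / 2) - (x - (a + b) / 2) • f' ((a + b) / 2)‖ ≤
      M / 2 * (x - (a + b) / 2) ^ 2 := fun _ =>
    norm_image_sub_sub_le_of_norm_hasDerivWithin_sub_le ((convex_Icc a b).starConvex
      (add_div_two_mem_Icc hab)) hf hM
  calc _ ≤ M / 2 * (b - a) ^ 4 / 32 := norm_integral_sub_midpoint_smul_sub_le hab
        (hf_cont.intervalIntegrable_of_Icc hab) htaylor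
    _ = M * (b - a) ^ 4 / 64 := by ring

end Moments

/-- First-moment midpoint quadrature estimate: for `f ∈ C²([a,b])` and `m = (a+b)/2`,
`| ∫_a^b (x − m) f(x) dx − f'(m) (b − a)³/12 | ≤ (sup |f''|) (b − a)⁴/64`. -/
theorem stmt10 (a b : ℝ) (hab : a < b) (f f' f'' : ℝ → ℝ) (M : ℝ)
    (hf : ∀ x ∈ Icc a b, HasDerivWithinAt f (f' x) (Icc a b) x)
    (hf' : ∀ x ∈ Icc a b, HasDerivWithinAt f' (f'' x) (Icc a b) x)
    (hf'' : ContinuousOn f'' (Icc a b))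
    (hM : ∀ x ∈ Icc a b, |f'' x| ≤ M) :
    |(∫ x in a..b, (x - (a + b) / 2) * f x) - f' ((a + b) / 2) * (b - a) ^ 3 / 12| ≤
      M * (b - a) ^ 4 / 64 := by
  rw [mul_div_assoc, mul_comm (f' _)]
  exact stmt10_general hab.le hf fun x =>
    (convex_Icc a b).norm_image_sub_le_of_norm_hasDerivWithin_le hf' hM
      (add_div_two_mem_Icc hab.le)
end
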